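/- arXiv:2303.17794 — 2 statements merged into one kernel-verified Lean document; each statement's English description precedes it below -/
import Mathlib

section
/- Let b > 0 and q ∈ (−1/b, b], and let P = P_{q,b} ⊂ ℝ² be the pentagon defined as the convex hull of the five points (−1/b, 0), (q, r), (q, −r), (b, c), (b, −c), where r = √(1+q²) and c = (1+bq)/√(1+q²). Then the polar body of P equals −P, i.e., P° = {−p : p ∈ P}. -/
open MeasureTheory

noncomputable section

/-- The polar body `K° = {y | ⟨x, y⟩ ≤ 1 for all x ∈ K}` in the plane. -/
def polarBody (K : Set (Fin 2 → ℝ)) : Set (Fin 2 → ℝ) :=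
  {y | ∀ x ∈ K, x 0 * y 0 + x 1 * y 1 ≤ 1}

/-- The volume product `vp(K) = |K| · |K°|`. -/
def vp (K : Set (Fin 2 → ℝ)) : ℝ :=
  (volume K).toReal * (volume (polarBody K)).toReal

/-- The barycenter `G_A = |A|⁻¹ ∫_A x dx`. -/
def bary (A : Set (Fin 2 → ℝ)) : Fin 2 → ℝ :=
  (volume A).toReal⁻¹ • ∫ x in A, x

/-- The covariance matrix `cov(K)_{ij} = |K|⁻¹ ∫_K x_i x_j dx`. -/
def covM (K : Set (Fin 2 → ℝ)) : Matrix (Fin 2) (Fin 2) ℝ :=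
  Matrix.of fun i j => (volume K).toReal⁻¹ * ∫ x in K, x i * x j

/-- The pentagon `P_{q,b}`: convex hull of `(-1/b, 0)`, `(q, ±r)`, `(b, ±c)`
where `r = √(1+q²)` and `c = (1+bq)/√(1+q²)`. -/
def pent (q b : ℝ) : Set (Fin 2 → ℝ) :=
  convexHull ℝ
    {![-1/b, 0], ![q, Real.sqrt (1 + q ^ 2)], ![q, -Real.sqrt (1 + q ^ 2)],
      ![b, (1 + b * q) / Real.sqrt (1 + q ^ 2)], ![b, -((1 + b * q) / Real.sqrt (1 + q ^ 2))]}

/-!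
Reflection in the first axis preserves the pentagon, so everything takes place on the upper
boundary chain `(a, 0), (q, r), (b, c)` with `a = -1/b`, and `y` lies in the polar body exactly when
`h * |y 1| ≤ 1 - x * y 0` for the three points `(x, h)` of the chain. For `y` the negative of a
vertex these are polynomial inequalities in `a, q, r, b, c`, the only ones with content being
`-1 ≤ aq`, that is `q ≤ b`, and the Cauchy–Schwarz bound `c² ≤ 1 + b²`. Conversely, for `-y = (s, t)` they say `s ≤ b`,
`r|t| ≤ 1 + qs` and `c|t| ≤ 1 + bs`. The last one cuts out the edge from `(a, 0)` to `(q, r)`,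
because `1 + bs = b(s - a)`, and the second one the edge from `(q, r)` to `(b, c)`, because
`r² = 1 + q²` and `rc = 1 + bq`. So `(s, t)` lies in one of the two trapezoids, the first of them a
triangle, into which the line through `(q, ±r)` divides the pentagon.
-/

section Polar

variable {K L : Set (Fin 2 → ℝ)}

theorem convex_polarBody (K : Set (Fin 2 → ℝ)) : Convex ℝ (polarBody K) := by
  simp only [polarBody, Set.ofPred_forall]
  refine convex_iInter₂ fun x _ => convex_halfSpace_le (IsLinearMap.mk ?_ ?_) 1
  · intro y z
    simp only [Pi.add_apply]
    ring
  · intro k y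
    simp only [Pi.smul_apply, smul_eq_mul]
    ring

theorem subset_polarBody_comm : K ⊆ polarBody L ↔ L ⊆ polarBody K := by
  simp only [Set.subset_def, polarBody, Set.mem_ofPred_eq]
  constructor <;>
  · intro h x hx y hy
    simpa only [mul_comm] using h y hy x hx

theorem polarBody_convexHull (K : Set (Fin 2 → ℝ)) :
    polarBody (convexHull ℝ K) = polarBody K := by
  refine Set.Subset.antisymm (fun y hy x hx => hy x (subset_convexHull ℝ K hx)) ?_
  rw [subset_polarBody_comm]
  exact convexHull_min (subset_polarBody_comm.1 Set.Subset.rfl) (convex_polarBody _)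

end Polar

section Trapezoid

variable {𝕜 : Type*} [Field 𝕜] [LinearOrder 𝕜] [IsStrictOrderedRing 𝕜] {S : Set (Fin 2 → 𝕜)}

theorem mem_of_convex_of_abs_le {s t h : 𝕜} (hS : Convex 𝕜 S) (hpos : ![s, h] ∈ S)
    (hneg : ![s, -h] ∈ S) (ht : |t| ≤ h) : ![s, t] ∈ S := by
  have update_eq (u : 𝕜) : Function.update ![s, 0] 1 u = ![s, u] := by
    ext i
    fin_cases i <;> simp
  have ht' : t ∈ segment 𝕜 (-h) h := Icc_subset_segment (abs_le.1 ht)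
  have mem_image := Set.mem_image_of_mem (Function.update ![s, 0] 1) ht'
  rw [Pi.image_update_segment] at mem_image
  simp only [update_eq] at mem_image
  exact hS.segment_subset hneg hpos mem_image

theorem mem_of_convex_of_mem_trapezoid {x₀ x₁ h₀ h₁ s t : 𝕜} (hS : Convex 𝕜 S)
    (hpos₀ : ![x₀, h₀] ∈ S) (hneg₀ : ![x₀, -h₀] ∈ S)
    (hpos₁ : ![x₁, h₁] ∈ S) (hneg₁ : ![x₁, -h₁] ∈ S)
    (hx : x₀ < x₁) (hs : s ∈ Set.Icc x₀ x₁)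
    (ht : (x₁ - x₀) * |t| ≤ (x₁ - s) * h₀ + (s - x₀) * h₁) : ![s, t] ∈ S := by
  have hd : 0 < x₁ - x₀ := sub_pos.2 hx
  set θ := (s - x₀) / (x₁ - x₀) with hθ
  have θ_mem : θ ∈ Set.Icc 0 1 :=
    ⟨div_nonneg (sub_nonneg.2 hs.1) hd.le, (div_le_one hd).2 (sub_le_sub_right hs.2 x₀)⟩
  have s_eq : AffineMap.lineMap x₀ x₁ θ = s := by
    rw [AffineMap.lineMap_apply_ring', hθ, div_mul_cancel₀ _ hd.ne', sub_add_cancel]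
  have lineMap_mem {u v : 𝕜} (hu : ![x₀, u] ∈ S) (hv : ![x₁, v] ∈ S) :
      ![s, AffineMap.lineMap u v θ] ∈ S := by
    convert hS.lineMap_mem hu hv θ_mem using 1
    ext i
    fin_cases i <;> simp [AffineMap.lineMap_apply, ← s_eq]
  refine mem_of_convex_of_abs_le hS (lineMap_mem hpos₀ hpos₁) ?_ ?_
  · convert lineMap_mem hneg₀ hneg₁ using 3
    simp only [AffineMap.lineMap_apply_ring']
    ring
  · refine le_of_mul_le_mul_left (ht.trans_eq ?_) hd
    rw [AffineMap.lineMap_apply_ring', hθ]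
    field_simp
    ring

end Trapezoid

section Pentagon

variable {a q r b c : ℝ}

/-- The vertices `(a, 0)`, `(q, ±r)`, `(b, ±c)` of a pentagon symmetric in the first axis. The
pentagon `P_{q,b}` has `a = -1/b`, `r = √(1+q²)` and `c = (1+bq)/√(1+q²)`; keeping the five numbers
free reduces self-polarity to polynomial relations between them. -/
def pentVertices (a q r b c : ℝ) : Set (Fin 2 → ℝ) :=
  {![a, 0], ![q, r], ![q, -r], ![b, c], ![b, -c]}

theorem mem_pentVertices_iff {x : Fin 2 → ℝ} (hr : 0 ≤ r) (hc : 0 ≤ c) :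
    x ∈ pentVertices a q r b c ↔
      x 0 = a ∧ |x 1| = 0 ∨ x 0 = q ∧ |x 1| = r ∨ x 0 = b ∧ |x 1| = c := by
  have eq_iff (u v : ℝ) : x = ![u, v] ↔ x 0 = u ∧ x 1 = v := by
    simp [funext_iff, Fin.forall_fin_two]
  simp only [pentVertices, Set.mem_insert_iff, Set.mem_singleton_iff, eq_iff, abs_eq_zero,
    abs_eq hr, abs_eq hc]
  tauto

theorem mem_polarBody_pentVertices_iff {y : Fin 2 → ℝ} (hr : 0 ≤ r) (hc : 0 ≤ c) :
    y ∈ polarBody (pentVertices a q r b c) ↔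
      a * y 0 ≤ 1 ∧ r * |y 1| ≤ 1 - q * y 0 ∧ c * |y 1| ≤ 1 - b * y 0 := by
  have mul_abs_le_iff {h k : ℝ} (hh : 0 ≤ h) : h * |y 1| ≤ k ↔ h * y 1 ≤ k ∧ -h * y 1 ≤ k := by
    rw [← abs_of_nonneg hh, ← abs_mul, abs_le', abs_of_nonneg hh, neg_mul]
  simp [polarBody, pentVertices, mul_abs_le_iff, hr, hc, le_sub_iff_add_le', and_assoc]

theorem neg_pentVertices_subset_polarBody (hr : 0 ≤ r) (hc : 0 ≤ c) (hab : a * b = -1)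
    (haq : -1 ≤ a * q) (hrr : r ^ 2 ≤ 1 + q ^ 2) (hrc : r * c ≤ 1 + b * q)
    (hcc : c ^ 2 ≤ 1 + b ^ 2) :
    -pentVertices a q r b c ⊆ polarBody (pentVertices a q r b c) := by
  intro y hy
  rw [Set.mem_neg, mem_pentVertices_iff hr hc, Pi.neg_apply, Pi.neg_apply, abs_neg] at hy
  rw [mem_polarBody_pentVertices_iff hr hc]
  rcases hy with ⟨h₀, h₁⟩ | ⟨h₀, h₁⟩ | ⟨h₀, h₁⟩ <;>
    rw [h₁, ← neg_neg (y 0), h₀]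
  · exact ⟨by linarith [mul_self_nonneg a], by linarith, by linarith⟩
  · exact ⟨by linarith, by linarith, by linarith⟩
  · exact ⟨by linarith, by linarith, by linarith⟩

theorem mem_of_convex_of_pentVertices_subset {S : Set (Fin 2 → ℝ)} {s t : ℝ} (hS : Convex ℝ S)
    (hV : pentVertices a q r b c ⊆ S) (hb : 0 < b) (hr : 0 < r) (hc : 0 ≤ c)
    (hab : a * b = -1) (haq : a < q) (hrr : r ^ 2 = 1 + q ^ 2) (hrc : r * c = 1 + b * q)
    (has : -(a * s) ≤ 1) (hrt : r * |t| ≤ 1 + q * s) (hct : c * |t| ≤ 1 + b * s) :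
    ![s, t] ∈ S := by
  simp only [pentVertices, Set.insert_subset_iff, Set.singleton_subset_iff] at hV
  obtain ⟨a_mem, qr_mem, qr_mem', bc_mem, bc_mem'⟩ := hV
  have a_le_s : a ≤ s := by
    have : 0 ≤ 1 + b * s := (mul_nonneg hc (abs_nonneg t)).trans hct
    exact le_of_mul_le_mul_left (by linarith) hb
  have s_le_b : s ≤ b :=
    calc s = b * -(a * s) := by linear_combination s * hab
      _ ≤ b * 1 := by gcongr
      _ = b := mul_one b
  rcases le_or_gt s q with hsq | hqs
  · refine mem_of_convex_of_mem_trapezoid hS a_mem (by simpa using a_mem) qr_mem qr_mem'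
      haq ⟨a_le_s, hsq⟩ ?_
    refine le_of_mul_le_mul_left ?_ hb
    calc b * ((q - a) * |t|) = r * (c * |t|) := by linear_combination (-|t|) * (hab + hrc)
      _ ≤ r * (1 + b * s) := by gcongr
      _ = b * ((q - s) * 0 + (s - a) * r) := by linear_combination r * hab
  · refine mem_of_convex_of_mem_trapezoid hS qr_mem qr_mem' bc_mem bc_mem'
      (hqs.trans_le s_le_b) ⟨hqs.le, s_le_b⟩ ?_
    refine le_of_mul_le_mul_left ?_ hr
    calc r * ((b - q) * |t|) = (b - q) * (r * |t|) := by ring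
      _ ≤ (b - q) * (1 + q * s) :=
        mul_le_mul_of_nonneg_left hrt (sub_nonneg.2 (hqs.le.trans s_le_b))
      _ = r * ((b - s) * r + (s - q) * c) := by
        linear_combination (s - b) * hrr + (q - s) * hrc

theorem polarBody_pentVertices (hb : 0 < b) (hr : 0 < r) (hab : a * b = -1) (haq : a < q)
    (hqb : q ≤ b) (hrr : r ^ 2 = 1 + q ^ 2) (hrc : r * c = 1 + b * q) :
    polarBody (pentVertices a q r b c) = -convexHull ℝ (pentVertices a q r b c) := by
  have c_nonneg : 0 ≤ c := by
    refine nonneg_of_mul_nonneg_right ?_ hr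
    calc 0 ≤ b * (q - a) := mul_nonneg hb.le (sub_nonneg.2 haq.le)
      _ = r * c := by linear_combination -hab - hrc
  apply Set.Subset.antisymm
  · intro y hy
    obtain ⟨hay, hry, hcy⟩ := (mem_polarBody_pentVertices_iff hr.le c_nonneg).1 hy
    have neg_mem := mem_of_convex_of_pentVertices_subset (s := -y 0) (t := -y 1)
      (convex_convexHull ℝ _) (subset_convexHull ℝ (pentVertices a q r b c)) hb hr c_nonneg hab haq
      hrr hrc (by linarith) (by rw [abs_neg]; linarith) (by rw [abs_neg]; linarith)
    convert Set.neg_mem_neg.2 neg_mem using 1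
    ext i
    fin_cases i <;> simp
  · have neg_one_le : -1 ≤ a * q := by
      have a_nonpos : a ≤ 0 := nonpos_of_mul_nonpos_left (by linarith) hb
      exact hab.symm.le.trans (mul_le_mul_of_nonpos_left hqb a_nonpos)
    have c_sq_le : c ^ 2 ≤ 1 + b ^ 2 := by
      refine le_of_mul_le_mul_left ?_ (pow_pos hr 2)
      calc r ^ 2 * c ^ 2 = (1 + b * q) ^ 2 := by rw [← mul_pow, hrc]
        _ ≤ (1 + q ^ 2) * (1 + b ^ 2) := by linarith [sq_nonneg (b - q)]
        _ = r ^ 2 * (1 + b ^ 2) := by rw [hrr]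
    rw [← convexHull_neg]
    refine convexHull_min ?_ (convex_polarBody _)
    exact neg_pentVertices_subset_polarBody hr.le c_nonneg hab neg_one_le hrr.le hrc.le c_sq_le

end Pentagon

theorem stmt12 (b q : ℝ) (hb : 0 < b) (hq : q ∈ Set.Ioc (-1/b) b) :
    polarBody (pent q b) = -(pent q b) := by
  have hr : 0 < √(1 + q ^ 2) := Real.sqrt_pos.2 (by positivity)
  change polarBody (convexHull ℝ (pentVertices _ _ _ _ _)) = _
  rw [polarBody_convexHull]
  exact polarBody_pentVertices hb hr (div_mul_cancel₀ _ hb.ne') hq.1 hq.2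
    (Real.sq_sqrt (by positivity)) (mul_div_cancel₀ _ hr.ne')
end
end

section
/- Let b > 0 and q ∈ (−1/b, b], and let P = P_{q,b} ⊂ ℝ² be the pentagon defined as the convex hull of the five points (−1/b, 0), (q, ±r), (b, ±c), where r = √(1+q²) and c = (1+bq)/√(1+q²). Then the barycenter of P lies at the origin if and only if f(q,b) = q³b − q²b² − q² + 2qb⁵ + qb + 3b⁴ = 1. -/
open MeasureTheory

noncomputable section

/-! The pentagon is swept by vertical chords centred on the first axis, the chord at abscissa `x`
having as half-length the smaller of the heights of the lines through `(-1/b, 0)`, `(q, r)` and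
through `(q, r)`, `(b, c)`. By reflection the second coordinate of the barycenter vanishes, and by
Fubini the first one vanishes iff `∫ x * height x = 0`. The height is affine on `[-1/b, q]` and on
`[q, b]`, so this moment only depends on the heights `0`, `r`, `c` at the three nodes, and it equals
`(f(q, b) - 1) / (6 r b²)`. -/

/-- The plane region over `s ⊆ ℝ` swept by the vertical segments `{x} × [-h x, h x]`; it describes
the sets symmetric about the first axis and convex in the vertical direction. -/
def symmRegion (h : ℝ → ℝ) (s : Set ℝ) : Set (Fin 2 → ℝ) :=
  {v | v 0 ∈ s ∧ |v 1| ≤ h (v 0)}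

section SymmRegion

variable {h : ℝ → ℝ} {s : Set ℝ}

theorem convex_symmRegion (hh : ConcaveOn ℝ s h) : Convex ℝ (symmRegion h s) := by
  rintro v ⟨hv, hvh⟩ w ⟨hw, hwh⟩ a b ha hb hab
  refine ⟨hh.1 hv hw ha hb hab, ?_⟩
  calc |a * v 1 + b * w 1| ≤ a * |v 1| + b * |w 1| := by
        simpa only [abs_mul, abs_of_nonneg ha, abs_of_nonneg hb] using
          abs_add_le (a * v 1) (b * w 1)
    _ ≤ a * h (v 0) + b * h (w 0) := by gcongr
    _ ≤ h (a * v 0 + b * w 0) := hh.2 hv hw ha hb hab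

theorem mem_of_convex_of_abs_le_s13 {K : Set (Fin 2 → ℝ)} (hK : Convex ℝ K) {x y z : ℝ}
    (hpos : ![x, y] ∈ K) (hneg : ![x, -y] ∈ K) (hz : |z| ≤ y) : ![x, z] ∈ K := by
  have hz' : z ∈ segment ℝ (-y) y := by
    rw [segment_eq_Icc (neg_le_self ((abs_nonneg z).trans hz))]
    exact abs_le.1 hz
  obtain ⟨a, b, ha, hb, hab, rfl⟩ := hz'
  convert hK hneg hpos ha hb hab using 1
  simp [← add_mul, hab]

theorem symmRegion_Icc_subset {K : Set (Fin 2 → ℝ)} (hK : Convex ℝ K) {a b : ℝ}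
    (hh : ConvexOn ℝ (Set.Icc a b) h) (ha : ![a, h a] ∈ K) (ha' : ![a, -h a] ∈ K)
    (hb : ![b, h b] ∈ K) (hb' : ![b, -h b] ∈ K) : symmRegion h (Set.Icc a b) ⊆ K := by
  rintro v ⟨hv, hvh⟩
  have hab : a ≤ b := hv.1.trans hv.2
  obtain ⟨s, t, hs, ht, hst, hx⟩ : v 0 ∈ segment ℝ a b := by rwa [segment_eq_Icc hab]
  have hchord : |v 1| ≤ s * h a + t * h b :=
    hvh.trans (hx ▸ hh.2 (Set.left_mem_Icc.2 hab) (Set.right_mem_Icc.2 hab) hs ht hst)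
  have hupper : ![v 0, s * h a + t * h b] ∈ K := by
    convert hK ha hb hs ht hst using 1
    simp [← hx]
  have hlower : ![v 0, -(s * h a + t * h b)] ∈ K := by
    convert hK ha' hb' hs ht hst using 1
    simp [← hx, add_comm]
  have hv_eq : v = ![v 0, v 1] := by ext i; fin_cases i <;> rfl
  exact hv_eq ▸ mem_of_convex_of_abs_le_s13 hK hupper hlower hchord

theorem isCompact_symmRegion (hs : IsCompact s) (hh : ContinuousOn h s) :
    IsCompact (symmRegion h s) := by
  obtain ⟨M, hM⟩ := hs.bddAbove_image hh
  have hbox : IsCompact (Set.univ.pi ![s, Set.Icc (-M) M]) :=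
    isCompact_univ_pi (Fin.forall_fin_two.2 ⟨hs, isCompact_Icc⟩)
  have hclosed : IsClosed (symmRegion h s) :=
    (hs.isClosed.preimage (continuous_apply 0)).isClosed_le (by fun_prop)
      (hh.comp (by fun_prop) fun _ hv ↦ hv)
  exact hbox.of_isClosed_subset hclosed fun v hv ↦ Set.mem_univ_pi.2 <|
    Fin.forall_fin_two.2 ⟨hv.1, abs_le.1 (hv.2.trans (hM (Set.mem_image_of_mem h hv.1)))⟩

theorem setIntegral_symmRegion {E : Type*} [NormedAddCommGroup E] [NormedSpace ℝ E]
    {f : (Fin 2 → ℝ) → E} (hs : MeasurableSet s) (hR : MeasurableSet (symmRegion h s))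
    (hf : IntegrableOn f (symmRegion h s)) :
    ∫ v in symmRegion h s, f v = ∫ x in s, ∫ y in Set.Icc (-h x) (h x), f ![x, y] := by
  have hmp := (volume_preserving_finTwoArrow ℝ).symm
  have hslice (x y : ℝ) : (symmRegion h s).indicator f ![x, y] =
      s.indicator (fun x ↦ (Set.Icc (-h x) (h x)).indicator (fun y ↦ f ![x, y]) y) x := by
    by_cases hx : x ∈ s <;> simp [Set.indicator, symmRegion, abs_le, hx]
  calc ∫ v in symmRegion h s, f v
      = ∫ p : ℝ × ℝ, (symmRegion h s).indicator f ![p.1, p.2] := by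
        rw [← integral_indicator hR, ← hmp.integral_comp']
        rfl
    _ = ∫ x, ∫ y, (symmRegion h s).indicator f ![x, y] :=
        integral_prod _ (hmp.integrable_comp_of_integrable (hf.integrable_indicator hR))
    _ = ∫ x in s, ∫ y in Set.Icc (-h x) (h x), f ![x, y] := by
        rw [← integral_indicator hs]
        congr 1 with x
        by_cases hx : x ∈ s <;> simp [hslice, hx, integral_indicator measurableSet_Icc]

theorem setIntegral_fst_symmRegion (hs : IsCompact s) (hh : ContinuousOn h s)
    (h_nonneg : ∀ x ∈ s, 0 ≤ h x) :
    ∫ v in symmRegion h s, v 0 = 2 * ∫ x in s, x * h x := by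
  have hR := isCompact_symmRegion hs hh
  rw [setIntegral_symmRegion hs.measurableSet hR.measurableSet
    ((continuous_apply _).continuousOn.integrableOn_compact hR), ← integral_const_mul]
  refine setIntegral_congr_fun hs.measurableSet fun x hx ↦ ?_
  have hlen : volume.real (Set.Icc (-h x) (h x)) = 2 * h x := by
    rw [Real.volume_real_Icc_of_le (neg_le_self (h_nonneg x hx))]
    ring
  simp only [Matrix.cons_val_zero, setIntegral_const, hlen, smul_eq_mul]
  ring

theorem setIntegral_snd_symmRegion (hs : IsCompact s) (hh : ContinuousOn h s)
    (h_nonneg : ∀ x ∈ s, 0 ≤ h x) : ∫ v in symmRegion h s, v 1 = 0 := by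
  have hR := isCompact_symmRegion hs hh
  rw [setIntegral_symmRegion hs.measurableSet hR.measurableSet
    ((continuous_apply _).continuousOn.integrableOn_compact hR)]
  refine setIntegral_eq_zero_of_forall_eq_zero fun x hx ↦ ?_
  rw [integral_Icc_eq_integral_Ioc,
    ← intervalIntegral.integral_of_le (neg_le_self (h_nonneg x hx))]
  simp

end SymmRegion

-- For a null set `A`, `bary A` is `0⁻¹ • 0 = 0`, so both sides hold.
theorem bary_eq_zero_iff {A : Set (Fin 2 → ℝ)} (hA : volume A ≠ ⊤) :
    bary A = 0 ↔ ∫ v in A, v = 0 := by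
  refine smul_eq_zero.trans (or_iff_right_of_imp fun hvol ↦ ?_)
  have hnull : volume A = 0 := by simpa [ENNReal.toReal_eq_zero_iff, hA] using hvol
  exact setIntegral_measure_zero _ hnull

theorem bary_symmRegion_eq_zero_iff {h : ℝ → ℝ} {s : Set ℝ} (hs : IsCompact s)
    (hh : ContinuousOn h s) (h_nonneg : ∀ x ∈ s, 0 ≤ h x) :
    bary (symmRegion h s) = 0 ↔ ∫ x in s, x * h x = 0 := by
  have hR := isCompact_symmRegion hs hh
  have hcoord (i : Fin 2) : (∫ v in symmRegion h s, v) i = ∫ v in symmRegion h s, v i :=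
    eval_integral (fun j ↦ (continuous_apply j).continuousOn.integrableOn_compact hR) i
  simp [bary_eq_zero_iff hR.measure_ne_top, funext_iff, Fin.forall_fin_two, hcoord,
    setIntegral_fst_symmRegion hs hh h_nonneg, setIntegral_snd_symmRegion hs hh h_nonneg]

theorem integral_mul_of_affine {h : ℝ → ℝ} {s t α β : ℝ}
    (hh : ∀ x ∈ Set.uIcc s t, h x = α * x + β) :
    ∫ x in s..t, x * h x = (t - s) / 6 * ((2 * s + t) * h s + (s + 2 * t) * h t) := by
  calc ∫ x in s..t, x * h x
      = ∫ x in s..t, (α * x ^ 2 + β * x) :=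
        intervalIntegral.integral_congr fun x hx ↦ by simp only [hh x hx]; ring
    _ = α * ((t ^ 3 - s ^ 3) / 3) + β * ((t ^ 2 - s ^ 2) / 2) := by
        rw [intervalIntegral.integral_add (Continuous.intervalIntegrable (by fun_prop) _ _)
          (Continuous.intervalIntegrable (by fun_prop) _ _),
          intervalIntegral.integral_const_mul, intervalIntegral.integral_const_mul, integral_pow,
          integral_id]
        norm_num
    _ = (t - s) / 6 * ((2 * s + t) * h s + (s + 2 * t) * h t) := by
        rw [hh s Set.left_mem_uIcc, hh t Set.right_mem_uIcc]
        ring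

theorem convexOn_of_affine {h : ℝ → ℝ} {s : Set ℝ} (hs : Convex ℝ s) {α β : ℝ}
    (hh : ∀ x ∈ s, h x = α * x + β) : ConvexOn ℝ s h :=
  (((LinearMap.mulLeft ℝ α).convexOn hs).add_const β).congr fun x hx ↦ (hh x hx).symm

theorem concaveOn_of_affine {h : ℝ → ℝ} {s : Set ℝ} (hs : Convex ℝ s) {α β : ℝ}
    (hh : ∀ x ∈ s, h x = α * x + β) : ConcaveOn ℝ s h :=
  (((LinearMap.mulLeft ℝ α).concaveOn hs).add_const β).congr fun x hx ↦ (hh x hx).symm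

/-- Half the length of the vertical chord of the pentagon `P_{q,b}` at abscissa `x`: the smaller of
the heights of the line through `(-1/b, 0)`, `(q, r)` and the line through `(q, r)`, `(b, c)`. -/
def pentHeight (q b x : ℝ) : ℝ :=
  min (√(1 + q ^ 2) * (1 + b * x) / (1 + b * q)) ((1 + q * x) / √(1 + q ^ 2))

theorem continuous_pentHeight (q b : ℝ) : Continuous (pentHeight q b) := by
  unfold pentHeight
  fun_prop

theorem concaveOn_pentHeight (q b : ℝ) : ConcaveOn ℝ Set.univ (pentHeight q b) :=
  (concaveOn_of_affine convex_univ (α := √(1 + q ^ 2) * b / (1 + b * q))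
    (β := √(1 + q ^ 2) / (1 + b * q)) fun x _ ↦ by ring).inf
  (concaveOn_of_affine convex_univ (α := q / √(1 + q ^ 2)) (β := 1 / √(1 + q ^ 2))
    fun x _ ↦ by ring)

section PentHeight

variable {q b : ℝ}

theorem one_add_mul_pos_of_neg_one_div_lt (hb : 0 < b) (hq : -1 / b < q) : 0 < 1 + b * q := by
  linarith [(div_lt_iff₀' hb).1 hq]

theorem right_edge_height_sub_left_edge_height (hbq : 0 < 1 + b * q) (x : ℝ) :
    (1 + q * x) / √(1 + q ^ 2) - √(1 + q ^ 2) * (1 + b * x) / (1 + b * q) =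
      (q - x) * ((b - q) / (√(1 + q ^ 2) * (1 + b * q))) := by
  have hr2 : √(1 + q ^ 2) ^ 2 = 1 + q ^ 2 := Real.sq_sqrt (by positivity)
  rw [← mul_div_assoc, div_sub_div _ _ (by positivity) hbq.ne']
  congr 1
  linear_combination (-(1 + b * x)) * hr2

theorem pentHeight_of_le {x : ℝ} (hbq : 0 < 1 + b * q) (hqb : q ≤ b) (hx : x ≤ q) :
    pentHeight q b x = √(1 + q ^ 2) * (1 + b * x) / (1 + b * q) := by
  refine min_eq_left (sub_nonneg.1 ?_)
  rw [right_edge_height_sub_left_edge_height hbq]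
  have := sub_nonneg.2 hqb
  exact mul_nonneg (sub_nonneg.2 hx) (by positivity)

theorem pentHeight_of_ge {x : ℝ} (hbq : 0 < 1 + b * q) (hqb : q ≤ b) (hx : q ≤ x) :
    pentHeight q b x = (1 + q * x) / √(1 + q ^ 2) := by
  refine min_eq_right (sub_nonpos.1 ?_)
  rw [right_edge_height_sub_left_edge_height hbq]
  have := sub_nonneg.2 hqb
  exact mul_nonpos_of_nonpos_of_nonneg (sub_nonpos.2 hx) (by positivity)

variable (hb : 0 < b) (hq : q ∈ Set.Ioc (-1 / b) b)
include hb hq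

theorem pentHeight_at_neg_one_div_b : pentHeight q b (-1 / b) = 0 := by
  rw [pentHeight_of_le (one_add_mul_pos_of_neg_one_div_lt hb hq.1) hq.2 hq.1.le,
    mul_div_cancel₀ _ hb.ne']
  simp

theorem pentHeight_at_q : pentHeight q b q = √(1 + q ^ 2) := by
  have hbq := one_add_mul_pos_of_neg_one_div_lt hb hq.1
  rw [pentHeight_of_le hbq hq.2 le_rfl, mul_div_cancel_right₀ _ hbq.ne']

theorem pentHeight_at_b : pentHeight q b b = (1 + b * q) / √(1 + q ^ 2) := by
  rw [pentHeight_of_ge (one_add_mul_pos_of_neg_one_div_lt hb hq.1) hq.2 hq.2, mul_comm]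

theorem pentHeight_nonneg {x : ℝ} (hx : x ∈ Set.Icc (-1 / b) b) : 0 ≤ pentHeight q b x := by
  have hbq := one_add_mul_pos_of_neg_one_div_lt hb hq.1
  refine le_trans (le_min (pentHeight_at_neg_one_div_b hb hq).ge ?_)
    ((concaveOn_pentHeight q b).min_le_of_mem_Icc (Set.mem_univ _) (Set.mem_univ _) hx)
  rw [pentHeight_at_b hb hq]
  positivity

theorem exists_pentHeight_affine_left :
    ∃ α β, ∀ x ∈ Set.Icc (-1 / b) q, pentHeight q b x = α * x + β :=
  ⟨√(1 + q ^ 2) * b / (1 + b * q), √(1 + q ^ 2) / (1 + b * q), fun x hx ↦ by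
    rw [pentHeight_of_le (one_add_mul_pos_of_neg_one_div_lt hb hq.1) hq.2 hx.2]
    ring⟩

theorem exists_pentHeight_affine_right :
    ∃ α β, ∀ x ∈ Set.Icc q b, pentHeight q b x = α * x + β :=
  ⟨q / √(1 + q ^ 2), 1 / √(1 + q ^ 2), fun x hx ↦ by
    rw [pentHeight_of_ge (one_add_mul_pos_of_neg_one_div_lt hb hq.1) hq.2 hx.1]
    ring⟩

theorem pent_eq_convexHull_pentHeight : pent q b = convexHull ℝ
    {![-1 / b, pentHeight q b (-1 / b)], ![q, pentHeight q b q], ![q, -pentHeight q b q],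
      ![b, pentHeight q b b], ![b, -pentHeight q b b]} := by
  rw [pentHeight_at_neg_one_div_b hb hq, pentHeight_at_q hb hq, pentHeight_at_b hb hq, pent]

theorem pent_subset_symmRegion : pent q b ⊆ symmRegion (pentHeight q b) (Set.Icc (-1 / b) b) := by
  have hab : -1 / b ≤ b := hq.1.le.trans hq.2
  have hnode {x : ℝ} (hx : x ∈ Set.Icc (-1 / b) b) :
      ![x, pentHeight q b x] ∈ symmRegion (pentHeight q b) (Set.Icc (-1 / b) b) ∧
      ![x, -pentHeight q b x] ∈ symmRegion (pentHeight q b) (Set.Icc (-1 / b) b) := by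
    have h_abs := (abs_of_nonneg (pentHeight_nonneg hb hq hx)).le
    exact ⟨⟨hx, h_abs⟩, hx, (abs_neg _).trans_le h_abs⟩
  have ha := hnode (Set.left_mem_Icc.2 hab)
  have hm := hnode ⟨hq.1.le, hq.2⟩
  have hd := hnode (Set.right_mem_Icc.2 hab)
  rw [pent_eq_convexHull_pentHeight hb hq]
  refine convexHull_min ?_ (convex_symmRegion
    ((concaveOn_pentHeight q b).subset (Set.subset_univ _) (convex_Icc _ _)))
  simp only [Set.insert_subset_iff, Set.singleton_subset_iff]
  exact ⟨ha.1, hm.1, hm.2, hd.1, hd.2⟩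

theorem symmRegion_subset_pent : symmRegion (pentHeight q b) (Set.Icc (-1 / b) b) ⊆ pent q b := by
  obtain ⟨α₁, β₁, hleft⟩ := exists_pentHeight_affine_left hb hq
  obtain ⟨α₂, β₂, hright⟩ := exists_pentHeight_affine_right hb hq
  have hconv : Convex ℝ (pent q b) := convex_convexHull ℝ _
  have hvertices := (subset_convexHull ℝ _).trans_eq (pent_eq_convexHull_pentHeight hb hq).symm
  simp only [Set.insert_subset_iff, Set.singleton_subset_iff] at hvertices
  obtain ⟨ha, hm, hm', hd, hd'⟩ := hvertices
  have ha' : ![-1 / b, -pentHeight q b (-1 / b)] ∈ pent q b := by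
    rwa [pentHeight_at_neg_one_div_b hb hq, neg_zero, ← pentHeight_at_neg_one_div_b hb hq]
  rintro v ⟨⟨hav, hvb⟩, hv⟩
  rcases le_total (v 0) q with hvq | hqv
  · exact symmRegion_Icc_subset hconv (convexOn_of_affine (convex_Icc _ _) hleft) ha ha' hm hm'
      ⟨⟨hav, hvq⟩, hv⟩
  · exact symmRegion_Icc_subset hconv (convexOn_of_affine (convex_Icc _ _) hright) hm hm' hd hd'
      ⟨⟨hqv, hvb⟩, hv⟩

theorem pent_eq_symmRegion : pent q b = symmRegion (pentHeight q b) (Set.Icc (-1 / b) b) :=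
  (pent_subset_symmRegion hb hq).antisymm (symmRegion_subset_pent hb hq)

theorem integral_mul_pentHeight : ∫ x in Set.Icc (-1 / b) b, x * pentHeight q b x =
    (q ^ 3 * b - q ^ 2 * b ^ 2 - q ^ 2 + 2 * q * b ^ 5 + q * b + 3 * b ^ 4 - 1) /
      (6 * √(1 + q ^ 2) * b ^ 2) := by
  obtain ⟨α₁, β₁, hleft⟩ := exists_pentHeight_affine_left hb hq
  obtain ⟨α₂, β₂, hright⟩ := exists_pentHeight_affine_right hb hq
  rw [← Set.uIcc_of_le hq.1.le] at hleft
  rw [← Set.uIcc_of_le hq.2] at hright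
  have hint (s t : ℝ) : IntervalIntegrable (fun x ↦ x * pentHeight q b x) volume s t :=
    (continuous_id.mul (continuous_pentHeight q b)).intervalIntegrable s t
  have hr2 : √(1 + q ^ 2) ^ 2 = 1 + q ^ 2 := Real.sq_sqrt (by positivity)
  calc ∫ x in Set.Icc (-1 / b) b, x * pentHeight q b x
      = (∫ x in (-1 / b)..q, x * pentHeight q b x) + ∫ x in q..b, x * pentHeight q b x := by
        rw [integral_Icc_eq_integral_Ioc,
          ← intervalIntegral.integral_of_le (hq.1.le.trans hq.2),
          intervalIntegral.integral_add_adjacent_intervals (hint _ q) (hint q _)]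
    _ = (q - -1 / b) / 6 * ((-1 / b + 2 * q) * √(1 + q ^ 2)) +
        (b - q) / 6 * ((2 * q + b) * √(1 + q ^ 2) +
          (q + 2 * b) * ((1 + b * q) / √(1 + q ^ 2))) := by
        rw [integral_mul_of_affine hleft, integral_mul_of_affine hright,
          pentHeight_at_neg_one_div_b hb hq, pentHeight_at_q hb hq, pentHeight_at_b hb hq]
        ring
    _ = (q ^ 3 * b - q ^ 2 * b ^ 2 - q ^ 2 + 2 * q * b ^ 5 + q * b + 3 * b ^ 4 - 1) /
        (6 * √(1 + q ^ 2) * b ^ 2) := by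
        field_simp
        linear_combination (q * b - 1 + q * b ^ 3 + b ^ 4) * hr2

end PentHeight

theorem stmt13 (b q : ℝ) (hb : 0 < b) (hq : q ∈ Set.Ioc (-1/b) b) :
    bary (pent q b) = 0 ↔
      q ^ 3 * b - q ^ 2 * b ^ 2 - q ^ 2 + 2 * q * b ^ 5 + q * b + 3 * b ^ 4 = 1 := by
  rw [pent_eq_symmRegion hb hq, bary_symmRegion_eq_zero_iff isCompact_Icc
    (continuous_pentHeight q b).continuousOn fun _ hx ↦ pentHeight_nonneg hb hq hx,
    integral_mul_pentHeight hb hq, div_eq_zero_iff, or_iff_left (by positivity), sub_eq_zero]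
end
end
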